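/- (Bernstein–Dewar–Gortler–Nixon–Sitharam–Theran) Let $n \ge 1$ and let $G$ be a simple graph on vertex set $\{1,\dots,n\}$ with edge set $E(G)$. Let $\mathcal{M}_G$ be the set of real symmetric positive definite $n\times n$ matrices $K$ with $K_{ij} = 0$ whenever $i \ne j$ and $ij \notin E(G)$, and let the maximum likelihood threshold $\mathrm{MLT}(G)$ be the smallest positive integer $d$ such that for Lebesgue-almost every real $n\times d$ matrix $X$, the function $K \mapsto \operatorname{tr}(XX^{T}K) - \log\det K$ attains a minimum on $\mathcal{M}_G$. Then $\mathrm{MLT}(G)$ equals the minimum positive integer $d$ such that for Lebesgue-almost every $p : \{1,\dots,n\} \to \mathbb{R}^{d-1}$, there exists $q : \{1,\dots,n\} \to \mathbb{R}^{n-1}$ with $\|q(i) - q(j)\| = \|p(i) - p(j)\|$ (Euclidean norms) for every edge $ij \in E(G)$ and such that the affine span of $\{q(1), \dots, q(n)\}$ is all of $\mathbb{R}^{n-1}$. (Both minima exist.) -/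

import Mathlib

open MeasureTheory Matrix

noncomputable section

/-- The objective function `K ↦ tr(S K) − log det K` of Gaussian maximum likelihood. -/
def mlObjective {n : ℕ} (S K : Matrix (Fin n) (Fin n) ℝ) : ℝ :=
  (S * K).trace - Real.log K.det

/-- The maximum likelihood threshold of a set `M` of positive definite matrices:
the smallest positive integer `d` such that for Lebesgue-almost every real `n × d`
matrix `X`, the function `K ↦ tr(X Xᵀ K) − log det K` attains a minimum on `M`. -/
def mlt (n : ℕ) (M : Set (Matrix (Fin n) (Fin n) ℝ)) : ℕ :=
  sInf {d : ℕ | 0 < d ∧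
    ∀ᵐ X : Fin n → Fin d → ℝ ∂volume,
      ∃ K ∈ M, ∀ K' ∈ M,
        mlObjective (Matrix.of X * (Matrix.of X)ᵀ) K ≤
          mlObjective (Matrix.of X * (Matrix.of X)ᵀ) K'}

/-- The Gaussian graphical model of a graph `G` on `n` vertices: all symmetric positive
definite matrices whose off-diagonal entries vanish at non-edges of `G`. -/
def graphModel (n : ℕ) (G : SimpleGraph (Fin n)) : Set (Matrix (Fin n) (Fin n) ℝ) :=
  {K | K.PosDef ∧ ∀ i j, i ≠ j → ¬ G.Adj i j → K i j = 0}

end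

noncomputable section

open Filter Topology in
/-- Positive definiteness is stable under small symmetric perturbations. -/
theorem Matrix.PosDef.eventually_add_smul {ι : Type*} [Fintype ι] {K E : Matrix ι ι ℝ}
    (hK : K.PosDef) (hE : E.IsHermitian) : ∀ᶠ t : ℝ in 𝓝 0, (K + t • E).PosDef := by
  have hcont : Continuous fun z : ℝ × (ι → ℝ) => z.2 ⬝ᵥ (K + z.1 • E) *ᵥ z.2 := by
    fun_prop
  have hev : ∀ᶠ t : ℝ in 𝓝 0, ∀ x ∈ Metric.sphere (0 : ι → ℝ) 1,
      0 < x ⬝ᵥ (K + t • E) *ᵥ x := by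
    refine (isCompact_sphere _ _).eventually_forall_of_forall_eventually fun x hx => ?_
    refine (hcont.tendsto (0, x)).eventually (lt_mem_nhds ?_)
    have hx0 : x ≠ 0 := by rintro rfl; simp at hx
    simpa using hK.dotProduct_mulVec_pos hx0
  filter_upwards [hev] with t ht
  refine .of_dotProduct_mulVec_pos (hK.1.add ?_) fun x hx => ?_
  · have : (t • E)ᴴ = t • E := by rw [conjTranspose_smul, hE.eq]; simp
    exact this
  · have hpos : 0 < ‖x‖ := norm_pos_iff.2 hx
    have h := ht (‖x‖⁻¹ • x) (by simp [norm_smul, hpos.ne'])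
    simp only [mulVec_smul, smul_dotProduct, dotProduct_smul, smul_eq_mul] at h
    simpa using pos_of_mul_pos_right (pos_of_mul_pos_right h (by positivity)) (by positivity)

theorem Matrix.hasDerivAt_det_one_add_smul {ι : Type*} [Fintype ι] [DecidableEq ι]
    (M : Matrix ι ι ℝ) : HasDerivAt (fun t : ℝ => (1 + t • M).det) M.trace 0 := by
  have h := ((hasDerivAt_id (0 : ℝ)).const_mul M.trace).const_add 1 |>.add
    ((Polynomial.hasDerivAt ((det (1 + (Polynomial.X : Polynomial ℝ) • M.map
      Polynomial.C)).divX.divX) 0).mul (hasDerivAt_pow 2 (0 : ℝ)))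
  convert! h using 1
  · funext t; rw [det_one_add_smul]; rfl
  · simp

/-- The entries of a positive semidefinite matrix are bounded by its trace. -/
theorem Matrix.PosSemidef.abs_apply_le_trace {ι : Type*} [Fintype ι] [DecidableEq ι]
    {K : Matrix ι ι ℝ} (hK : K.PosSemidef) (i j : ι) : |K i j| ≤ K.trace := by
  have hsymm : K j i = K i j := by simpa using hK.1.apply i j
  have hle (k : ι) : K k k ≤ K.trace :=
    Finset.single_le_sum (f := fun k => K k k) (fun _ _ => hK.diag_nonneg) (Finset.mem_univ k)
  have h1 := hK.dotProduct_mulVec_nonneg (Pi.single i 1 + Pi.single j 1)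
  have h2 := hK.dotProduct_mulVec_nonneg (Pi.single i 1 - Pi.single j 1)
  simp only [star_trivial, mulVec_add, mulVec_sub, add_dotProduct, sub_dotProduct,
    dotProduct_add, dotProduct_sub, mulVec_single_one, single_dotProduct, col_apply,
    one_mul] at h1 h2
  rw [abs_le]
  constructor <;> linarith [hle i, hle j]

theorem Matrix.PosSemidef.det_le_trace_pow {n : ℕ} {K : Matrix (Fin n) (Fin n) ℝ}
    (hK : K.PosSemidef) : K.det ≤ K.trace ^ n := by
  rw [hK.1.det_eq_prod_eigenvalues, hK.1.trace_eq_sum_eigenvalues]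
  simp only [RCLike.ofReal_real_eq_id, id_eq]
  calc ∏ i, hK.1.eigenvalues i ≤ ∏ _i : Fin n, ∑ j, hK.1.eigenvalues j :=
        Finset.prod_le_prod (fun i _ => hK.eigenvalues_nonneg i) fun i _ =>
          Finset.single_le_sum (fun j _ => hK.eigenvalues_nonneg j) (Finset.mem_univ i)
    _ = _ := by simp

theorem Matrix.isClosed_posSemidef {ι : Type*} [Fintype ι] :
    IsClosed {K : Matrix ι ι ℝ | K.PosSemidef} := by
  have : {K : Matrix ι ι ℝ | K.PosSemidef} =
      {K | Kᴴ = K} ∩ ⋂ x : ι → ℝ, {K | 0 ≤ star x ⬝ᵥ K *ᵥ x} := by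
    ext K
    simp [posSemidef_iff_dotProduct_mulVec, IsHermitian]
  rw [this]
  refine (isClosed_eq (by fun_prop) (by fun_prop)).inter
    (isClosed_iInter fun x => isClosed_le (by fun_prop) (by fun_prop))

/-- A matrix is supported on a graph if its off-diagonal entries vanish at non-edges. -/
def SupportedOn {n : ℕ} (G : SimpleGraph (Fin n)) (K : Matrix (Fin n) (Fin n) ℝ) : Prop :=
  ∀ i j, i ≠ j → ¬ G.Adj i j → K i j = 0

theorem isClosed_supportedOn {n : ℕ} (G : SimpleGraph (Fin n)) :
    IsClosed {K : Matrix (Fin n) (Fin n) ℝ | SupportedOn G K} := by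
  simp only [SupportedOn, Set.ofPred_forall]
  refine isClosed_iInter fun i => isClosed_iInter fun j => isClosed_iInter fun _ =>
    isClosed_iInter fun _ => isClosed_eq (by fun_prop) (by fun_prop)

theorem isCompact_posSemidef_supportedOn_trace_le {n : ℕ} (G : SimpleGraph (Fin n)) (T : ℝ) :
    IsCompact {K : Matrix (Fin n) (Fin n) ℝ | K.PosSemidef ∧ SupportedOn G K ∧ K.trace ≤ T} := by
  have hbox : IsCompact (Set.univ.pi fun _ : Fin n => Set.univ.pi fun _ : Fin n =>
      Set.Icc (-T) T) :=
    isCompact_univ_pi fun _ => isCompact_univ_pi fun _ => isCompact_Icc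
  refine hbox.of_isClosed_subset ?_ fun K hK i _ j _ =>
    abs_le.1 ((hK.1.abs_apply_le_trace i j).trans hK.2.2)
  have htr : IsClosed {K : Matrix (Fin n) (Fin n) ℝ | K.trace ≤ T} :=
    isClosed_le (by fun_prop) (by fun_prop)
  exact isClosed_posSemidef.inter ((isClosed_supportedOn G).inter htr)

/-- No nonzero positive semidefinite matrix supported on `G` annihilates the columns of `X`. -/
def StressFree {n : ℕ} {κ : Type*} (G : SimpleGraph (Fin n)) (X : Matrix (Fin n) κ ℝ) : Prop :=
  ∀ K : Matrix (Fin n) (Fin n) ℝ, K.PosSemidef → SupportedOn G K → K * X = 0 → K = 0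

/-- The likelihood objective of the sample matrix `X` attains a minimum on the model of `G`. -/
def HasMLE {n d : ℕ} (G : SimpleGraph (Fin n)) (X : Matrix (Fin n) (Fin d) ℝ) : Prop :=
  ∃ K ∈ graphModel n G, ∀ K' ∈ graphModel n G,
    mlObjective (X * Xᵀ) K ≤ mlObjective (X * Xᵀ) K'

/-- The likelihood equations at a minimizer. -/
theorem trace_mul_eq_trace_inv_mul_of_isMin {n : ℕ} {G : SimpleGraph (Fin n)}
    {S K E : Matrix (Fin n) (Fin n) ℝ} (hK : K ∈ graphModel n G)
    (hmin : ∀ K' ∈ graphModel n G, mlObjective S K ≤ mlObjective S K')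
    (hE : E.IsHermitian) (hEG : SupportedOn G E) : (S * E).trace = (K⁻¹ * E).trace := by
  have hdet : K.det ≠ 0 := hK.1.det_pos.ne'
  have hfac (t : ℝ) : (K + t • E).det = K.det * (1 + t • (K⁻¹ * E)).det := by
    rw [← det_mul, mul_add, mul_one, mul_smul_comm, mul_nonsing_inv_cancel_left _ _
      (isUnit_iff_ne_zero.2 hdet)]
  have hd : HasDerivAt (fun t : ℝ => mlObjective S (K + t • E))
      ((S * E).trace - (K⁻¹ * E).trace) 0 := by
    have h1 : HasDerivAt (fun t : ℝ => (S * (K + t • E)).trace) (S * E).trace 0 := by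
      have := ((hasDerivAt_id (0 : ℝ)).mul_const (S * E).trace).const_add (S * K).trace
      convert! this using 1
      · funext t; simp [mul_add, trace_add]
      · simp
    have h2 : HasDerivAt (fun t : ℝ => Real.log (K + t • E).det) (K⁻¹ * E).trace 0 := by
      have := ((hasDerivAt_det_one_add_smul (K⁻¹ * E)).const_mul K.det).log (by simpa using hdet)
      convert! this using 1
      · funext t; rw [hfac]
      · simp [hdet]
    exact h1.sub h2
  have hloc : IsLocalMin (fun t : ℝ => mlObjective S (K + t • E)) 0 := by
    filter_upwards [hK.1.eventually_add_smul hE] with t ht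
    simpa using hmin _ ⟨ht, fun i j hij hG => by simp [hK.2 i j hij hG, hEG i j hij hG]⟩
  exact sub_eq_zero.1 (hloc.hasDerivAt_eq_zero hd)

theorem Matrix.PosDef.exists_isUnit_transpose_mul_self {n : ℕ}
    {K : Matrix (Fin n) (Fin n) ℝ} (hK : K.PosDef) :
    ∃ B : Matrix (Fin n) (Fin n) ℝ, IsUnit B ∧ K = Bᵀ * B := by
  open scoped MatrixOrder in
  exact CStarAlgebra.isStrictlyPositive_iff_eq_star_mul_self.1 hK.isStrictlyPositive

theorem HasMLE.stressFree {n d : ℕ} {G : SimpleGraph (Fin n)} {X : Matrix (Fin n) (Fin d) ℝ}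
    (h : HasMLE G X) : StressFree G X := by
  obtain ⟨K, hK, hmin⟩ := h
  intro E hE hEG hEX
  have heq := trace_mul_eq_trace_inv_mul_of_isMin hK hmin hE.1 hEG
  rw [trace_mul_comm, ← Matrix.mul_assoc, hEX, Matrix.zero_mul, trace_zero] at heq
  obtain ⟨B, hB, hKB⟩ := hK.1.inv.exists_isUnit_transpose_mul_self
  rw [hKB, Matrix.mul_assoc, trace_mul_comm] at heq
  have h0 : B * E * Bᵀ = 0 := (hE.mul_mul_conjTranspose_same B).trace_eq_zero_iff.1 heq.symm
  have hB' : IsUnit Bᵀ := (isUnit_transpose (A := B)).2 hB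
  exact hB.mul_right_eq_zero.1 (hB'.mul_left_eq_zero.1 h0)

theorem trace_gram_mul_nonneg {n d : ℕ} {K : Matrix (Fin n) (Fin n) ℝ} (hK : K.PosSemidef)
    (X : Matrix (Fin n) (Fin d) ℝ) : 0 ≤ (X * Xᵀ * K).trace := by
  rw [Matrix.mul_assoc, trace_mul_comm]
  exact (hK.conjTranspose_mul_mul_same X).trace_nonneg

theorem mul_eq_zero_of_trace_gram_mul_eq_zero {n d : ℕ} {K : Matrix (Fin n) (Fin n) ℝ}
    (hK : K.PosSemidef) {X : Matrix (Fin n) (Fin d) ℝ} (h : (X * Xᵀ * K).trace = 0) :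
    K * X = 0 := by
  rw [Matrix.mul_assoc, trace_mul_comm] at h
  have h0 := (hK.conjTranspose_mul_mul_same X).trace_eq_zero_iff.1 h
  ext i k
  have hk : star (fun j => X j k) ⬝ᵥ K *ᵥ (fun j => X j k) = 0 := by
    have := congrFun (congrFun h0 k) k
    rw [Matrix.mul_assoc] at this
    simpa [Matrix.mul_apply, dotProduct, mulVec] using this
  exact congrFun ((hK.dotProduct_mulVec_zero_iff _).1 hk) i

/-- On a stress-free sample, the linear part of the objective dominates the trace. -/
theorem StressFree.exists_mul_trace_le {n d : ℕ} {G : SimpleGraph (Fin n)}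
    {X : Matrix (Fin n) (Fin d) ℝ} (h : StressFree G X) :
    ∃ c : ℝ, 0 < c ∧ ∀ K : Matrix (Fin n) (Fin n) ℝ, K.PosSemidef → SupportedOn G K →
      c * K.trace ≤ (X * Xᵀ * K).trace := by
  have hcpt : IsCompact ({K : Matrix (Fin n) (Fin n) ℝ | K.PosSemidef ∧ SupportedOn G K ∧
      K.trace ≤ 1} ∩ {K | K.trace = 1}) :=
    (isCompact_posSemidef_supportedOn_trace_le G 1).inter_right
      (isClosed_eq (by fun_prop) (by fun_prop))
  obtain ⟨c, hc, hmin⟩ := hcpt.exists_forall_le' (f := fun K => (X * Xᵀ * K).trace) (a := 0)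
    (by fun_prop) (by
      rintro K ⟨⟨hK, hKG, -⟩, htr⟩
      refine (trace_gram_mul_nonneg hK X).lt_of_ne fun h0 => ?_
      have := h K hK hKG (mul_eq_zero_of_trace_gram_mul_eq_zero hK h0.symm)
      simp [this] at htr)
  refine ⟨c, hc, fun K hK hKG => ?_⟩
  rcases hK.trace_nonneg.eq_or_lt with h0 | hpos
  · rw [← h0, mul_zero]; exact trace_gram_mul_nonneg hK X
  · have htr : (K.trace⁻¹ • K).trace = 1 := by simp [hpos.ne']
    have := hmin (K.trace⁻¹ • K) ⟨⟨hK.smul (inv_nonneg.2 hpos.le),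
      fun i j hij hG => by simp [hKG i j hij hG], htr.le⟩, htr⟩
    rw [mul_smul_comm, trace_smul, smul_eq_mul, inv_mul_eq_div, le_div_iff₀ hpos] at this
    exact this

theorem one_mem_graphModel {n : ℕ} (G : SimpleGraph (Fin n)) : 1 ∈ graphModel n G :=
  ⟨.one, fun _ _ hij _ => one_apply_ne hij⟩

theorem StressFree.hasMLE {n d : ℕ} {G : SimpleGraph (Fin n)} {X : Matrix (Fin n) (Fin d) ℝ}
    (h : StressFree G X) : HasMLE G X := by
  obtain ⟨c, hc, hdom⟩ := h.exists_mul_trace_le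
  set S := X * Xᵀ with hS
  set m := mlObjective S 1 with hm
  set ε := c / (2 * (n + 1)) with hε
  have hε0 : 0 < ε := by positivity
  set T := 2 * (m - n - n * Real.log ε) / c with hT
  set D := {K : Matrix (Fin n) (Fin n) ℝ | K.PosSemidef ∧ SupportedOn G K ∧ K.trace ≤ T} ∩
    {K | Real.exp (-m) ≤ K.det} with hD
  have hDcpt : IsCompact D := (isCompact_posSemidef_supportedOn_trace_le G T).inter_right
    (isClosed_le (by fun_prop) (by fun_prop))
  have hsub : ∀ K ∈ graphModel n G, mlObjective S K ≤ m → K ∈ D := by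
    intro K hK hle
    have hdet := hK.1.det_pos
    have hlow := hdom K hK.1.posSemidef hK.2
    have hobj : (S * K).trace - Real.log K.det ≤ m := hle
    refine ⟨⟨hK.1.posSemidef, hK.2, ?_⟩, ?_⟩
    · have hlog : Real.log K.det ≤ n * Real.log K.trace := by
        rw [← Real.log_pow]
        exact Real.log_le_log hdet hK.1.posSemidef.det_le_trace_pow
      have hnlog : n * Real.log K.trace ≤ n * (ε * K.trace - 1 - Real.log ε) := by
        rcases hK.1.posSemidef.trace_nonneg.eq_or_lt with h0 | hpos
        · rcases Nat.eq_zero_or_pos n with rfl | hn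
          · simp
          · have : Nonempty (Fin n) := ⟨⟨0, hn⟩⟩
            exact absurd h0 hK.1.trace_pos.ne
        · gcongr
          have := Real.log_le_sub_one_of_pos (mul_pos hε0 hpos)
          rw [Real.log_mul hε0.ne' hpos.ne'] at this
          linarith
      have hnε : n * ε ≤ c / 2 := by
        rw [hε, mul_div_assoc', div_le_div_iff₀ (by positivity) two_pos]
        nlinarith
      have := mul_le_mul_of_nonneg_right hnε hK.1.posSemidef.trace_nonneg
      rw [hT, le_div_iff₀ hc]
      linarith
    · have h0 := trace_gram_mul_nonneg hK.1.posSemidef X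
      rw [Set.mem_ofPred_eq, ← Real.le_log_iff_exp_le hdet]
      linarith
  have h1D : (1 : Matrix (Fin n) (Fin n) ℝ) ∈ D := hsub 1 (one_mem_graphModel G) le_rfl
  have hcont : ContinuousOn (mlObjective S) D := by
    unfold mlObjective
    refine ContinuousOn.sub (by fun_prop) (ContinuousOn.log (by fun_prop) fun K hK => ?_)
    exact ((Real.exp_pos _).trans_le hK.2).ne'
  obtain ⟨K, hKD, hKmin⟩ := hDcpt.exists_isMinOn ⟨1, h1D⟩ hcont
  refine ⟨K, ⟨hKD.1.1.posDef_iff_det_ne_zero.2 ((Real.exp_pos _).trans_le hKD.2).ne',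
    hKD.1.2.1⟩, fun K' hK' => ?_⟩
  rcases le_or_gt (mlObjective S K') m with hle | hgt
  · exact hKmin (hsub K' hK' hle)
  · exact (hKmin h1D).trans hgt.le

theorem hasMLE_iff_stressFree {n d : ℕ} {G : SimpleGraph (Fin n)}
    {X : Matrix (Fin n) (Fin d) ℝ} : HasMLE G X ↔ StressFree G X :=
  ⟨HasMLE.stressFree, StressFree.hasMLE⟩

/-- The matrix with rows `(1, p i)`. -/
def homogenize {n k : ℕ} (p : Fin n → Fin k → ℝ) : Matrix (Fin n) (Fin (k + 1)) ℝ :=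
  of fun i => Fin.cons 1 (p i)

/-- The framework `p` on `G` is equivalent to one affinely spanning a space of dimension `n - 1`. -/
def HasSpanningEquivalent {n k : ℕ} (G : SimpleGraph (Fin n))
    (p : Fin n → EuclideanSpace ℝ (Fin k)) : Prop :=
  ∃ q : Fin n → EuclideanSpace ℝ (Fin (n - 1)),
    (∀ i j, G.Adj i j → ‖q i - q j‖ = ‖p i - p j‖) ∧ affineSpan ℝ (Set.range q) = ⊤

theorem sum_mul_norm_sub_sq {n : ℕ} {V : Type*} [NormedAddCommGroup V] [InnerProductSpace ℝ V]
    {K : Matrix (Fin n) (Fin n) ℝ} (hK : K.IsHermitian) (h1 : ∀ i, ∑ j, K i j = 0)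
    (v : Fin n → V) :
    ∑ i, ∑ j, K i j * ‖v i - v j‖ ^ 2 = -2 * ∑ i, ∑ j, K i j * inner ℝ (v i) (v j) := by
  have hsymm (i j) : K i j = K j i := by simpa using (hK.apply i j).symm
  have hrow : ∑ i, ∑ j, K i j * ‖v i‖ ^ 2 = 0 := by
    simp [← Finset.sum_mul, h1]
  have hcol : ∑ i, ∑ j, K i j * ‖v j‖ ^ 2 = 0 := by
    rw [Finset.sum_comm, ← hrow]
    exact Finset.sum_congr rfl fun i _ => Finset.sum_congr rfl fun j _ => by rw [hsymm]
  calc ∑ i, ∑ j, K i j * ‖v i - v j‖ ^ 2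
      = ∑ i, ∑ j, K i j * ‖v i‖ ^ 2 + -2 * ∑ i, ∑ j, K i j * inner ℝ (v i) (v j)
        + ∑ i, ∑ j, K i j * ‖v j‖ ^ 2 := by
        simp only [Finset.mul_sum, ← Finset.sum_add_distrib, norm_sub_sq_real]
        exact Finset.sum_congr rfl fun i _ => Finset.sum_congr rfl fun j _ => by ring
    _ = _ := by rw [hrow, hcol]; ring

theorem affineIndependent_of_affineSpan_range_eq_top {n : ℕ} (hn : 1 ≤ n)
    {q : Fin n → EuclideanSpace ℝ (Fin (n - 1))} (hq : affineSpan ℝ (Set.range q) = ⊤) :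
    AffineIndependent ℝ q := by
  rw [affineIndependent_iff_le_finrank_vectorSpan ℝ q (n := n - 1) (by simp; omega),
    ← direction_affineSpan, hq, AffineSubspace.direction_top, finrank_top]
  simp

theorem HasSpanningEquivalent.stressFree {n k : ℕ} (hn : 1 ≤ n) {G : SimpleGraph (Fin n)}
    {p : Fin n → EuclideanSpace ℝ (Fin k)} (h : HasSpanningEquivalent G p) :
    StressFree G (homogenize fun i => (p i).ofLp) := by
  obtain ⟨q, hqp, hspan⟩ := h
  have hind := affineIndependent_of_affineSpan_range_eq_top hn hspan
  intro K hK hKG hKX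
  have h1 (i) : ∑ j, K i j = 0 := by
    have := congrFun (congrFun hKX i) 0
    simpa [Matrix.mul_apply, homogenize] using this
  have hp (i) : ∑ j, K i j • p j = 0 := by
    ext l
    have := congrFun (congrFun hKX i) l.succ
    simpa [Matrix.mul_apply, homogenize] using this
  have henergy : ∑ i, ∑ j, K i j * inner ℝ (q i) (q j) = 0 := by
    have hpz : ∑ i, ∑ j, K i j * inner ℝ (p i) (p j) = 0 := by
      refine Finset.sum_eq_zero fun i _ => ?_
      simp only [← real_inner_smul_right, ← inner_sum, hp, inner_zero_right]
    have heq : ∑ i, ∑ j, K i j * ‖q i - q j‖ ^ 2 = ∑ i, ∑ j, K i j * ‖p i - p j‖ ^ 2 := by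
      refine Finset.sum_congr rfl fun i _ => Finset.sum_congr rfl fun j _ => ?_
      by_cases hij : i = j
      · simp [hij]
      · by_cases hG : G.Adj i j
        · rw [hqp i j hG]
        · simp [hKG i j hij hG]
    rw [sum_mul_norm_sub_sq hK.1 h1, sum_mul_norm_sub_sq hK.1 h1, hpz] at heq
    linarith
  have hcoord : ∑ l, star (fun i => q i l) ⬝ᵥ K *ᵥ (fun i => q i l) = 0 := by
    rw [← henergy]
    simp only [dotProduct, mulVec, PiLp.inner_apply, Finset.mul_sum]
    rw [Finset.sum_comm]
    refine Finset.sum_congr rfl fun i _ => ?_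
    rw [Finset.sum_comm]
    refine Finset.sum_congr rfl fun j _ => Finset.sum_congr rfl fun l _ => ?_
    simp
    ring
  have hq (i) : ∑ j, K i j • q j = 0 := by
    ext l
    have hl := (Finset.sum_eq_zero_iff_of_nonneg
      fun l _ => hK.dotProduct_mulVec_nonneg (fun i => q i l)).1 hcoord l (Finset.mem_univ l)
    have := congrFun ((hK.dotProduct_mulVec_zero_iff _).1 hl) i
    simpa [mulVec, dotProduct] using this
  ext i j
  exact affineIndependent_iff.1 hind Finset.univ (K i) (h1 i) (hq i) j (Finset.mem_univ j)

/-- Affinely independent points can be moved isometrically to a space that they span. -/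
theorem AffineIndependent.exists_isometric_spanning {n : ℕ} (hn : 1 ≤ n) {V : Type*}
    [NormedAddCommGroup V] [InnerProductSpace ℝ V] [FiniteDimensional ℝ V] {v : Fin n → V}
    (hv : AffineIndependent ℝ v) :
    ∃ q : Fin n → EuclideanSpace ℝ (Fin (n - 1)),
      (∀ i j, ‖q i - q j‖ = ‖v i - v j‖) ∧ affineSpan ℝ (Set.range q) = ⊤ := by
  let W := vectorSpan ℝ (Set.range v)
  have hW : Module.finrank ℝ W = n - 1 := hv.finrank_vectorSpan (by simp; omega)
  let φ : W ≃ₗᵢ[ℝ] EuclideanSpace ℝ (Fin (n - 1)) :=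
    ((stdOrthonormalBasis ℝ W).reindex (finCongr hW)).repr
  let o : Fin n := ⟨0, hn⟩
  let w : Fin n → W := fun i =>
    ⟨v i -ᵥ v o, vsub_mem_vectorSpan ℝ (Set.mem_range_self i) (Set.mem_range_self o)⟩
  have hnorm (i j) : ‖φ (w i) - φ (w j)‖ = ‖v i - v j‖ := by
    rw [← map_sub, φ.norm_map, Submodule.coe_norm]
    simp [w]
  refine ⟨fun i => φ (w i), hnorm, ?_⟩
  have hind : AffineIndependent ℝ fun i => φ (w i) := by
    rw [affineIndependent_iff_linearIndependent_vsub ℝ _ o] at hv ⊢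
    have h1 : LinearIndependent ℝ fun i : {i // i ≠ o} => w i :=
      LinearIndependent.of_comp W.subtype hv
    have h2 := h1.map' φ.toLinearEquiv.toLinearMap φ.toLinearEquiv.ker
    convert! h2 using 2 with i
    have : w o = 0 := by ext; simp [w]
    simp [this]
  rw [hind.affineSpan_eq_top_iff_card_eq_finrank_add_one]
  simp
  omega

theorem StressFree.hasSpanningEquivalent {n k : ℕ} (hn : 1 ≤ n) {G : SimpleGraph (Fin n)}
    {p : Fin n → EuclideanSpace ℝ (Fin k)}
    (h : StressFree G (homogenize fun i => (p i).ofLp)) : HasSpanningEquivalent G p := by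
  obtain ⟨K, hK, hmin⟩ := h.hasMLE
  set X := homogenize fun i => (p i).ofLp with hX
  obtain ⟨B, hB, hKB⟩ := hK.1.inv.exists_isUnit_transpose_mul_self
  have hKsymm (i j) : K⁻¹ i j = K⁻¹ j i := by simpa using (hK.1.inv.1.apply i j).symm
  have hSsymm (i j) : (X * Xᵀ) i j = (X * Xᵀ) j i := by
    simp [Matrix.mul_apply, mul_comm]
  have hS (i j) : (X * Xᵀ) i j = 1 + inner ℝ (p i) (p j) := by
    simp [hX, homogenize, Matrix.mul_apply, Fin.sum_univ_succ, PiLp.inner_apply, mul_comm]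
  have hentry (i j) (hij : i = j ∨ G.Adj i j) : (X * Xᵀ) i j = K⁻¹ i j := by
    have := trace_mul_eq_trace_inv_mul_of_isMin hK hmin
      (E := single i j 1 + single j i 1) (by
        rw [IsHermitian, conjTranspose_add, conjTranspose_single, conjTranspose_single]
        simp [add_comm]) (by
        intro a b hab hG
        have h1 : ¬ (i = a ∧ j = b) := by
          rintro ⟨rfl, rfl⟩; exact hij.elim hab hG
        have h2 : ¬ (j = a ∧ i = b) := by
          rintro ⟨rfl, rfl⟩; exact hij.elim (fun h => hab h.symm) (fun h => hG h.symm)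
        simp [h1, h2])
    simp only [mul_add, trace_add, trace_mul_single] at this
    simp only [MulOpposite.op_one, one_smul] at this
    rw [hSsymm j i, hKsymm j i] at this
    linarith
  let v : Fin n → EuclideanSpace ℝ (Fin n) := fun i => WithLp.toLp 2 (B.col i)
  have hv (i j) : inner ℝ (v i) (v j) = K⁻¹ i j := by
    rw [hKB]
    simp [v, Matrix.mul_apply, PiLp.inner_apply, mul_comm]
  have hlin : LinearIndependent ℝ v :=
    (linearIndependent_cols_iff_isUnit.2 hB).map' (WithLp.linearEquiv 2 ℝ _).symm.toLinearMap
      (WithLp.linearEquiv 2 ℝ _).symm.ker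
  obtain ⟨q, hq, hspan⟩ := (hlin.affineIndependent ℝ).exists_isometric_spanning hn
  refine ⟨q, fun i j hij => ?_, hspan⟩
  rw [hq, ← sq_eq_sq₀ (norm_nonneg _) (norm_nonneg _), norm_sub_sq_real, norm_sub_sq_real]
  simp only [← real_inner_self_eq_norm_sq, hv]
  rw [← hentry i i (.inl rfl), ← hentry j j (.inl rfl), ← hentry i j (.inr hij), hS, hS, hS]
  ring

theorem hasSpanningEquivalent_iff_stressFree {n k : ℕ} (hn : 1 ≤ n) {G : SimpleGraph (Fin n)}
    {p : Fin n → EuclideanSpace ℝ (Fin k)} :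
    HasSpanningEquivalent G p ↔ StressFree G (homogenize fun i => (p i).ofLp) :=
  ⟨HasSpanningEquivalent.stressFree hn, StressFree.hasSpanningEquivalent hn⟩

/-- Stress-freeness is inherited under nonzero rescalings of the rows. -/
theorem StressFree.diagonal_mul {n : ℕ} {κ : Type*} {G : SimpleGraph (Fin n)}
    {X : Matrix (Fin n) κ ℝ} (h : StressFree G X) {a : Fin n → ℝ} (ha : ∀ i, a i ≠ 0) :
    StressFree G (diagonal a * X) := by
  intro K hK hKG hKX
  have h0 : diagonal a * K * diagonal a = 0 := by
    refine h _ ?_ (fun i j hij hG => by simp [hKG i j hij hG]) ?_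
    · simpa using hK.mul_mul_conjTranspose_same (diagonal a)
    · rw [Matrix.mul_assoc, Matrix.mul_assoc, hKX, Matrix.mul_zero]
  ext i j
  have := congrFun (congrFun h0 i) j
  simpa [ha i, ha j] using this

theorem quasiMeasurePreserving_row_smul {n k : ℕ} {a : Fin n → ℝ} (ha : ∀ i, a i ≠ 0) :
    Measure.QuasiMeasurePreserving
      (fun (Y : Fin n → Fin k → ℝ) i => a i • Y i) volume volume := by
  let f : (Fin n → Fin k → ℝ) ≃ₗ[ℝ] (Fin n → Fin k → ℝ) :=
    LinearEquiv.piCongrRight fun i => LinearEquiv.smulOfNeZero ℝ (Fin k → ℝ) (a i) (ha i)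
  refine ⟨by fun_prop, Measure.AbsolutelyContinuous.mk fun s hs h0 => ?_⟩
  rw [Measure.map_apply (by fun_prop) hs]
  change volume (f.toLinearMap ⁻¹' s) = 0
  rw [Measure.addHaar_preimage_linearMap _ f.isUnit_det'.ne_zero, h0, mul_zero]

/-- Splitting off the first column of a matrix preserves Lebesgue measure. -/
theorem exists_measurePreserving_cons (n k : ℕ) :
    ∃ e : (Fin n → Fin (k + 1) → ℝ) ≃ᵐ (Fin n → ℝ) × (Fin n → Fin k → ℝ),
      MeasurePreserving e volume volume ∧ ∀ a Y i, e.symm (a, Y) i = Fin.cons (a i) (Y i) := by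
  let e := (MeasurableEquiv.piCongrRight fun _ : Fin n =>
      MeasurableEquiv.piFinSuccAbove (fun _ : Fin (k + 1) => ℝ) 0).trans
    (MeasurableEquiv.arrowProdEquivProdArrow ℝ (Fin k → ℝ) (Fin n))
  refine ⟨e, ?_, fun a Y i => ?_⟩
  · exact (volume_measurePreserving_arrowProdEquivProdArrow ℝ (Fin k → ℝ) (Fin n)).comp
      (volume_preserving_pi fun _ => volume_preserving_piFinSuccAbove (fun _ => ℝ) 0)
  · change Fin.insertNth (α := fun _ => ℝ) 0 (a i) (Y i) = _
    simp

theorem diagonal_mul_homogenize {n k : ℕ} (a : Fin n → ℝ) (p : Fin n → Fin k → ℝ) :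
    diagonal a * homogenize p = of fun i => Fin.cons (a i) (a i • p i) := by
  ext i j
  refine Fin.cases ?_ (fun j => ?_) j <;> simp [homogenize]

theorem ae_forall_ne_zero (n : ℕ) : ∀ᵐ a : Fin n → ℝ, ∀ i, a i ≠ 0 :=
  ae_all_iff.2 fun i =>
    (Measure.quasiMeasurePreserving_eval (fun _ : Fin n => (volume : Measure ℝ)) i).ae
      (Measure.ae_ne volume 0)

theorem ae_stressFree_iff_ae_stressFree_homogenize {n k : ℕ} (G : SimpleGraph (Fin n)) :
    (∀ᵐ X : Fin n → Fin (k + 1) → ℝ, StressFree G (of X)) ↔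
      ∀ᵐ p : Fin n → Fin k → ℝ, StressFree G (homogenize p) := by
  obtain ⟨e, he, hesymm⟩ := exists_measurePreserving_cons n k
  have hcons (a Y) : of (e.symm (a, Y)) = of fun i => Fin.cons (a i) (Y i) := by
    ext i j; simp [hesymm]
  constructor
  · intro h
    have h1 := Measure.ae_ae_of_ae_prod ((he.symm e).quasiMeasurePreserving.ae h)
    obtain ⟨a, ha, ha0⟩ := (h1.and (ae_forall_ne_zero n)).exists
    filter_upwards [(quasiMeasurePreserving_row_smul ha0).ae ha] with p hp
    rw [hcons, ← diagonal_mul_homogenize] at hp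
    have := hp.diagonal_mul (a := fun i => (a i)⁻¹) fun i => inv_ne_zero (ha0 i)
    rw [← Matrix.mul_assoc, diagonal_mul_diagonal] at this
    simpa [ha0] using this
  · intro h
    set N := toMeasurable volume {p : Fin n → Fin k → ℝ | ¬ StressFree G (homogenize p)} with hN
    have hN0 : ∀ᵐ p : Fin n → Fin k → ℝ, p ∉ N := by
      rw [ae_iff]
      simpa [hN, measure_toMeasurable] using ae_iff.1 h
    have hA : MeasurableSet {z : (Fin n → ℝ) × (Fin n → Fin k → ℝ) |
        (fun i => (z.1 i)⁻¹ • z.2 i) ∉ N} := by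
      have : Measurable fun z : (Fin n → ℝ) × (Fin n → Fin k → ℝ) =>
        fun i => (z.1 i)⁻¹ • z.2 i := by fun_prop
      exact this (measurableSet_toMeasurable _ _).compl
    have hprod : ∀ᵐ z : (Fin n → ℝ) × (Fin n → Fin k → ℝ),
        (fun i => (z.1 i)⁻¹ • z.2 i) ∉ N := by
      refine (Measure.ae_prod_iff_ae_ae hA).2 ?_
      filter_upwards [ae_forall_ne_zero n] with a ha
      exact (quasiMeasurePreserving_row_smul fun i => inv_ne_zero (ha i)).ae hN0
    have hne : ∀ᵐ z : (Fin n → ℝ) × (Fin n → Fin k → ℝ), ∀ i, z.1 i ≠ 0 :=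
      Measure.quasiMeasurePreserving_fst.ae (ae_forall_ne_zero n)
    have hSF : ∀ᵐ z : (Fin n → ℝ) × (Fin n → Fin k → ℝ), StressFree G (of (e.symm z)) := by
      filter_upwards [hprod, hne] with z hz hz0
      have hQ : StressFree G (homogenize fun i => (z.1 i)⁻¹ • z.2 i) := by
        by_contra hcon
        exact hz (subset_toMeasurable _ _ hcon)
      have := hQ.diagonal_mul hz0
      rw [diagonal_mul_homogenize] at this
      rw [show z = (z.1, z.2) from rfl, hcons]
      simpa [smul_smul, hz0] using this
    simpa using he.quasiMeasurePreserving.ae hSF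

theorem ae_comp_ofLp_iff {n k : ℕ} (P : (Fin n → Fin k → ℝ) → Prop) :
    (∀ᵐ p : Fin n → EuclideanSpace ℝ (Fin k), P fun i => (p i).ofLp) ↔ ∀ᵐ p, P p := by
  constructor
  · intro h
    exact (volume_preserving_pi fun _ : Fin n =>
      PiLp.volume_preserving_toLp (Fin k)).quasiMeasurePreserving.ae h
  · intro h
    exact (volume_preserving_pi fun _ : Fin n =>
      PiLp.volume_preserving_ofLp (Fin k)).quasiMeasurePreserving.ae h

/-- Almost every sample admits a maximum likelihood estimate exactly if almost every framework in
one dimension less has a spanning equivalent. -/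
theorem ae_hasMLE_iff_ae_hasSpanningEquivalent {n k : ℕ} (hn : 1 ≤ n) (G : SimpleGraph (Fin n)) :
    (∀ᵐ X : Fin n → Fin (k + 1) → ℝ, HasMLE G (of X)) ↔
      ∀ᵐ p : Fin n → EuclideanSpace ℝ (Fin k), HasSpanningEquivalent G p := by
  simp only [hasMLE_iff_stressFree, hasSpanningEquivalent_iff_stressFree hn]
  rw [ae_stressFree_iff_ae_stressFree_homogenize,
    ae_comp_ofLp_iff fun p => StressFree G (homogenize p)]

theorem ae_det_ne_zero (n : ℕ) : ∀ᵐ X : Fin n → Fin n → ℝ, (of X).det ≠ 0 := by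
  have hshift : ∀ᵐ t : ℝ, ∀ᵐ X : Fin n → Fin n → ℝ, (t • 1 - of X).det ≠ 0 := by
    refine (Measure.ae_ae_comm (p := fun (X : Fin n → Fin n → ℝ) (t : ℝ) =>
      (t • 1 - of X).det ≠ 0) ?_).1 (.of_forall fun X => ?_)
    · have : Continuous fun z : (Fin n → Fin n → ℝ) × ℝ =>
          (z.2 • (1 : Matrix (Fin n) (Fin n) ℝ) - of z.1).det := by
        refine Continuous.matrix_det (.sub (by fun_prop) ?_)
        exact continuous_fst
      exact (isOpen_ne.preimage this).measurableSet
    · have hfin : (spectrum ℝ (of X)).Finite := finite_real_spectrum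
      filter_upwards [hfin.countable.ae_notMem volume] with t ht
      rw [spectrum.notMem_iff, isUnit_iff_isUnit_det, Algebra.algebraMap_eq_smul_one] at ht
      exact ht.ne_zero
  obtain ⟨t, ht⟩ := hshift.exists
  have hsub := (Measure.measurePreserving_sub_left (volume : Measure (Fin n → Fin n → ℝ))
    (t • (1 : Matrix (Fin n) (Fin n) ℝ))).quasiMeasurePreserving.ae ht
  filter_upwards [hsub] with X hX
  convert! hX using 2
  ext i j
  exact (sub_sub_cancel _ _).symm

theorem ae_hasMLE_self {n : ℕ} (G : SimpleGraph (Fin n)) :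
    ∀ᵐ X : Fin n → Fin n → ℝ, HasMLE G (of X) := by
  filter_upwards [ae_det_ne_zero n] with X hX
  refine StressFree.hasMLE fun K _ _ hKX => ?_
  rwa [((isUnit_iff_isUnit_det _).2 hX.isUnit).mul_left_eq_zero] at hKX

end

/-- For a graph `G` on `n ≥ 1` vertices, `MLT(G)` is the minimum positive integer `d` such
that almost every `(d−1)`-dimensional framework on `G` is equivalent to an
`(n−1)`-dimensional framework whose points affinely span `ℝ^{n−1}`. The conclusion is
`IsLeast`, so it includes that such a `d` exists. -/
theorem mlt_eq_min_equivalent_spanning (n : ℕ) (hn : 1 ≤ n) (G : SimpleGraph (Fin n)) :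
    IsLeast {d : ℕ | 0 < d ∧
        ∀ᵐ p : Fin n → EuclideanSpace ℝ (Fin (d - 1)) ∂volume,
          ∃ q : Fin n → EuclideanSpace ℝ (Fin (n - 1)),
            (∀ i j, G.Adj i j → ‖q i - q j‖ = ‖p i - p j‖) ∧
            affineSpan ℝ (Set.range q) = ⊤}
      (mlt n (graphModel n G)) := by
  have hset : {d : ℕ | 0 < d ∧
        ∀ᵐ p : Fin n → EuclideanSpace ℝ (Fin (d - 1)) ∂volume,
          ∃ q : Fin n → EuclideanSpace ℝ (Fin (n - 1)),
            (∀ i j, G.Adj i j → ‖q i - q j‖ = ‖p i - p j‖) ∧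
            affineSpan ℝ (Set.range q) = ⊤} =
      {d : ℕ | 0 < d ∧ ∀ᵐ X : Fin n → Fin d → ℝ, HasMLE G (of X)} := by
    ext d
    refine and_congr_right fun hd => ?_
    obtain ⟨k, rfl⟩ := Nat.exists_eq_succ_of_ne_zero hd.ne'
    exact (ae_hasMLE_iff_ae_hasSpanningEquivalent hn G).symm
  rw [hset]
  exact ⟨Nat.sInf_mem ⟨n, hn, ae_hasMLE_self G⟩, fun d hd => Nat.sInf_le hd⟩
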